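/- Let (y_n) \subset \mathbb{Q}\setminus\{-1,1\} be an admissible solution of y_{n+1} + y_{n-1} = (a_n + b_n y_n + c_n y_n^2)/(1 - y_n^2), where a_n, b_n, c_n are rational functions of n with rational coefficients, c_n is not identically equal to 0, 2 or -2, and the right-hand side is of degree two in y_n for all sufficiently large n. Then there exists an integer r_0 such that for every F with 1 < F < 2 there is a constant D > 0 such that the summed logarithmic height h_r(y) = \sum_{n=r_0}^r h(y_n) satisfies h_r(y) \ge D\,F^r for all r \ge r_0. -/

import Mathlib

/-- The logarithmic height of a rational number `x = a/b` in lowest terms: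
`h(x) = log max {|a|, |b|}`. -/
noncomputable def ratHeight (x : ℚ) : ℝ := Real.log (max (|x.num| : ℝ) (x.den : ℝ))

/-- Evaluation of a rational function of `n` (with rational coefficients) at `n : ℕ`. -/
noncomputable def evalRF (f : RatFunc ℚ) (n : ℕ) : ℚ :=
  RatFunc.eval (RingHom.id ℚ) (n : ℚ) f

/-! Write the recurrence as `y' + y'' + c = p / (1 - y) + q / (1 + y)`. At every absolute value, up
to a bounded error, if `y` is close to a pole `±1`, then one of its neighbours `y'`, `y''` is large,
and a large `y` does not have both neighbours close to poles, because the value `-c` of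
`y' + y''` at `y = ∞` avoids `0`, `2` and `-2`. Each approach to a pole is thus paid for by its own
large neighbour. Since the proximity of `y n` to the two poles, summed over all places, is
`2 h(y n)` up to a constant, summation over `n` gives `2 H r ≤ H (r + 1) + O(T r)` for the summed
heights `H` of the solution and `T` of the coefficients, and `T = o(H)` makes `H` grow
geometrically with every ratio `F < 2`. -/

open Asymptotics Filter Finset Height Real

section LocalHeight

variable {K : Type*} [Field K] {v : AbsoluteValue K ℝ} {κ : ℝ} {x y : K}

/-- The local logarithmic height `log⁺ |x|` of `x` with respect to an absolute value. -/
noncomputable def localHeight (v : AbsoluteValue K ℝ) (x : K) : ℝ := log⁺ (v x)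

/-- `κ` is an Artin constant of `v` if `|x + y| ≤ κ max(|x|, |y|)`. Artin constants treat
archimedean (`κ = 2`) and nonarchimedean (`κ = 1`) absolute values on the same footing. -/
def IsArtinConst (v : AbsoluteValue K ℝ) (κ : ℝ) : Prop :=
  ∀ x y, v (x + y) ≤ κ * max (v x) (v y)

lemma localHeight_nonneg (v : AbsoluteValue K ℝ) (x : K) : 0 ≤ localHeight v x := posLog_nonneg

lemma localHeight_one (v : AbsoluteValue K ℝ) : localHeight v 1 = 0 := by simp [localHeight]

lemma localHeight_neg (v : AbsoluteValue K ℝ) (x : K) : localHeight v (-x) = localHeight v x := by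
  simp [localHeight]

lemma localHeight_mul_le (v : AbsoluteValue K ℝ) (x y : K) :
    localHeight v (x * y) ≤ localHeight v x + localHeight v y := by
  simpa only [localHeight, map_mul] using posLog_mul

lemma isArtinConst_two (v : AbsoluteValue K ℝ) : IsArtinConst v 2 := fun x y ↦ by
  linarith [v.add_le x y, le_max_left (v x) (v y), le_max_right (v x) (v y)]

lemma isArtinConst_one (hv : IsNonarchimedean v) : IsArtinConst v 1 := fun x y ↦ by
  simpa only [one_mul] using hv x y

namespace IsArtinConst

lemma one_le (hκ : IsArtinConst v κ) : 1 ≤ κ := by simpa using hκ 1 0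

lemma posLog_mul_le (hκ : IsArtinConst v κ) (t : ℝ) : log⁺ (κ * t) ≤ log⁺ t + log κ := by
  have hκ_log : log⁺ κ = log κ := posLog_eq_log (hκ.one_le.trans (le_abs_self κ))
  linarith [posLog_mul (x := κ) (y := t)]

lemma localHeight_add_le (hκ : IsArtinConst v κ) (x y : K) :
    localHeight v (x + y) ≤ max (localHeight v x) (localHeight v y) + log κ := by
  have hmax : log⁺ (max (v x) (v y)) = max (localHeight v x) (localHeight v y) :=
    monotoneOn_posLog.map_max (v.nonneg x) (v.nonneg y)
  rw [← hmax]
  exact (posLog_le_posLog (v.nonneg _) (hκ x y)).trans (hκ.posLog_mul_le _)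

lemma localHeight_sub_le (hκ : IsArtinConst v κ) (x y : K) :
    localHeight v (x - y) ≤ max (localHeight v x) (localHeight v y) + log κ := by
  simpa only [sub_eq_add_neg, localHeight_neg] using hκ.localHeight_add_le x (-y)

lemma localHeight_inv_le_of_le (hκ : IsArtinConst v κ) (hxy : x + y ≠ 0) (h : v y ≤ v x) :
    x ≠ 0 ∧ localHeight v x⁻¹ ≤ localHeight v (x + y)⁻¹ + log κ := by
  have hsum : v (x + y) ≤ κ * v x := max_eq_left h ▸ hκ x y
  have hsum_pos : 0 < v (x + y) := v.pos hxy
  have hx_pos : 0 < v x := pos_of_mul_pos_right (hsum_pos.trans_le hsum) (by linarith [hκ.one_le])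
  refine ⟨v.pos_iff.mp hx_pos, ?_⟩
  have hinv : v x⁻¹ ≤ κ * v (x + y)⁻¹ := by
    rw [map_inv₀, map_inv₀, ← div_eq_mul_inv, inv_eq_one_div, div_le_div_iff₀ hx_pos hsum_pos]
    linarith
  exact (posLog_le_posLog (v.nonneg _) hinv).trans (hκ.posLog_mul_le _)

lemma localHeight_inv_le_or (hκ : IsArtinConst v κ) (hxy : x + y ≠ 0) :
    (x ≠ 0 ∧ localHeight v x⁻¹ ≤ localHeight v (x + y)⁻¹ + log κ) ∨
      (y ≠ 0 ∧ localHeight v y⁻¹ ≤ localHeight v (x + y)⁻¹ + log κ) := by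
  rcases le_total (v y) (v x) with h | h
  · exact .inl (hκ.localHeight_inv_le_of_le hxy h)
  · rw [add_comm x y] at hxy ⊢
    exact .inr (hκ.localHeight_inv_le_of_le hxy h)

end IsArtinConst

/-- The local proximity of `y` to the poles `1` and `-1` of the recurrence. -/
noncomputable def poleProximity (v : AbsoluteValue K ℝ) (y : K) : ℝ :=
  localHeight v (1 - y)⁻¹ + localHeight v (1 + y)⁻¹

lemma poleProximity_nonneg (v : AbsoluteValue K ℝ) (y : K) : 0 ≤ poleProximity v y :=
  add_nonneg (localHeight_nonneg _ _) (localHeight_nonneg _ _)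

lemma poleProximity_neg (v : AbsoluteValue K ℝ) (y : K) :
    poleProximity v (-y) = poleProximity v y := by
  rw [poleProximity, poleProximity, sub_neg_eq_add, ← sub_eq_add_neg, add_comm]

/-- A common local error bound `E` for the partial fraction form
`y' + y'' + c = p / (1 - y) + q / (1 + y)` of the recurrence. -/
structure IsErrorBound (v : AbsoluteValue K ℝ) (κ E : ℝ) (p q c : K) : Prop where
  isArtinConst : IsArtinConst v κ
  log_le : log κ ≤ E
  two_inv_le : localHeight v 2⁻¹ ≤ E
  left_le : localHeight v p ≤ E
  left_inv_le : localHeight v p⁻¹ ≤ E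
  right_le : localHeight v q ≤ E
  right_inv_le : localHeight v q⁻¹ ≤ E
  const_le : localHeight v c ≤ E
  const_inv_le : localHeight v c⁻¹ ≤ E
  const_add_two_inv_le : localHeight v (c + 2)⁻¹ ≤ E
  const_sub_two_inv_le : localHeight v (c - 2)⁻¹ ≤ E

namespace IsErrorBound

variable {E : ℝ} {p q c y' y'' : K}

lemma nonneg (h : IsErrorBound v κ E p q c) : 0 ≤ E :=
  (localHeight_nonneg v _).trans h.const_le

lemma symm (h : IsErrorBound v κ E p q c) : IsErrorBound v κ E q p c :=
  { h with
    left_le := h.right_le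
    left_inv_le := h.right_inv_le
    right_le := h.left_le
    right_inv_le := h.left_inv_le }

lemma add_le (h : IsErrorBound v κ E p q c) (x y : K) :
    localHeight v (x + y) ≤ max (localHeight v x) (localHeight v y) + E :=
  (h.isArtinConst.localHeight_add_le x y).trans (by linarith [h.log_le])

lemma sub_le (h : IsErrorBound v κ E p q c) (x y : K) :
    localHeight v (x - y) ≤ max (localHeight v x) (localHeight v y) + E :=
  (h.isArtinConst.localHeight_sub_le x y).trans (by linarith [h.log_le])

lemma inv_le_or (h : IsErrorBound v κ E p q c) (hxy : x + y ≠ 0) :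
    (x ≠ 0 ∧ localHeight v x⁻¹ ≤ localHeight v (x + y)⁻¹ + E) ∨
      (y ≠ 0 ∧ localHeight v y⁻¹ ≤ localHeight v (x + y)⁻¹ + E) := by
  refine (h.isArtinConst.localHeight_inv_le_or hxy).imp ?_ ?_ <;>
    exact fun ⟨hne, hle⟩ ↦ ⟨hne, by linarith [hle, h.log_le]⟩

lemma localHeight_inv_one_sub_le_or [NeZero (2 : K)] (h : IsErrorBound v κ E p q c) (y : K) :
    localHeight v (1 - y)⁻¹ ≤ 2 * E ∨ localHeight v (1 + y)⁻¹ ≤ 2 * E := by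
  have hsum : 1 - y + (1 + y) = 2 := by ring
  have hinv := h.inv_le_or (hsum ▸ two_ne_zero : 1 - y + (1 + y) ≠ 0)
  rw [hsum] at hinv
  refine hinv.imp ?_ ?_ <;> exact fun ⟨_, hle⟩ ↦ by linarith [hle, h.two_inv_le]

lemma poleProximity_le_of_right [NeZero (2 : K)] (h : IsErrorBound v κ E p q c) (hp : p ≠ 0)
    (hrec : y' + y'' + c = p / (1 - y) + q / (1 + y))
    (hright : localHeight v (1 + y)⁻¹ ≤ 2 * E) :
    poleProximity v y ≤ max (localHeight v y') (localHeight v y'') + 7 * E := by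
  set M := max (localHeight v y') (localHeight v y'')
  have hM : 0 ≤ M := le_max_of_le_left (localHeight_nonneg _ _)
  have hlhs : localHeight v (y' + y'' + c) ≤ M + 2 * E := by
    have hmax : max (localHeight v (y' + y'')) (localHeight v c) ≤ M + E :=
      max_le (h.add_le y' y'') (by linarith [h.const_le])
    linarith [h.add_le (y' + y'') c]
  have hq : localHeight v (q * (1 + y)⁻¹) ≤ 3 * E := by
    linarith [localHeight_mul_le v q (1 + y)⁻¹, h.right_le]
  have hleft : localHeight v (1 - y)⁻¹ ≤ M + 5 * E := by
    have hsolve : (1 - y)⁻¹ = p⁻¹ * (y' + y'' + c - q * (1 + y)⁻¹) := by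
      rw [hrec, div_eq_mul_inv, div_eq_mul_inv, add_sub_cancel_right, inv_mul_cancel_left₀ hp]
    have hmax : max (localHeight v (y' + y'' + c)) (localHeight v (q * (1 + y)⁻¹)) ≤ M + 3 * E :=
      max_le (by linarith [h.nonneg]) (by linarith)
    rw [hsolve]
    linarith [localHeight_mul_le v p⁻¹ (y' + y'' + c - q * (1 + y)⁻¹), h.left_inv_le,
      h.sub_le (y' + y'' + c) (q * (1 + y)⁻¹)]
  rw [poleProximity]
  linarith

lemma poleProximity_le [NeZero (2 : K)] (h : IsErrorBound v κ E p q c) (hp : p ≠ 0) (hq : q ≠ 0)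
    (hrec : y' + y'' + c = p / (1 - y) + q / (1 + y)) :
    poleProximity v y ≤ max (localHeight v y') (localHeight v y'') + 7 * E := by
  rcases h.localHeight_inv_one_sub_le_or y with hleft | hright
  · rw [← poleProximity_neg]
    refine h.symm.poleProximity_le_of_right hq ?_ (by rwa [← sub_eq_add_neg])
    rw [hrec, sub_neg_eq_add, ← sub_eq_add_neg, add_comm]
  · exact h.poleProximity_le_of_right hp hrec hright

lemma exists_pole [NeZero (2 : K)] (h : IsErrorBound v κ E p q c) (y : K) :
    ∃ θ : K, (θ = 1 ∨ θ = -1) ∧ poleProximity v y ≤ localHeight v (θ - y)⁻¹ + 2 * E := by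
  rcases h.localHeight_inv_one_sub_le_or y with hleft | hright
  · refine ⟨-1, .inr rfl, ?_⟩
    have hneg : (-1 - y)⁻¹ = -(1 + y)⁻¹ := by rw [← inv_neg, neg_add']
    rw [hneg, localHeight_neg, poleProximity]
    linarith
  · exact ⟨1, .inl rfl, by rw [poleProximity]; linarith⟩

lemma localHeight_le_of_inv_div_le (h : IsErrorBound v κ E p q c) (hp : p ≠ 0)
    (hX : localHeight v (p / (1 - y))⁻¹ ≤ 3 * E) : localHeight v y ≤ 5 * E := by
  have hE := h.nonneg
  have hpole : localHeight v (1 - y) ≤ 4 * E := by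
    have hsolve : 1 - y = p * (p / (1 - y))⁻¹ := by rw [inv_div, mul_div_cancel₀ _ hp]
    rw [hsolve]
    linarith [localHeight_mul_le v p (p / (1 - y))⁻¹, h.left_le]
  have hmax : max (localHeight v 1) (localHeight v (1 - y)) ≤ 4 * E :=
    max_le (by rw [localHeight_one]; linarith) hpole
  have hsub := h.sub_le 1 (1 - y)
  rw [sub_sub_cancel] at hsub
  linarith

/-- A large `y` cannot lie between two neighbours that are both close to poles `θ'`, `θ''`:
the recurrence would force `c` to be close to `-θ' - θ'' ∈ {0, 2, -2}`. -/
lemma min_localHeight_poleProximity_le [NeZero (2 : K)] (h : IsErrorBound v κ E p q c)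
    (hp : p ≠ 0) (hq : q ≠ 0) (hc : c ≠ 0) (hc_add : c + 2 ≠ 0) (hc_sub : c - 2 ≠ 0)
    (hrec : y' + y'' + c = p / (1 - y) + q / (1 + y)) :
    min (localHeight v y) (min (poleProximity v y') (poleProximity v y'')) ≤ 5 * E := by
  obtain ⟨θ', hθ', hN'⟩ := h.exists_pole y'
  obtain ⟨θ'', hθ'', hN''⟩ := h.exists_pole y''
  have hsum : p / (1 - y) + q / (1 + y) + (θ' - y' + (θ'' - y'')) = c + (θ' + θ'') := by
    linear_combination -hrec
  have hgap : c + (θ' + θ'') ≠ 0 ∧ localHeight v (c + (θ' + θ''))⁻¹ ≤ E := by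
    rcases hθ' with rfl | rfl <;> rcases hθ'' with rfl | rfl
    · rw [one_add_one_eq_two]; exact ⟨hc_add, h.const_add_two_inv_le⟩
    · rw [add_neg_cancel, add_zero]; exact ⟨hc, h.const_inv_le⟩
    · rw [neg_add_cancel, add_zero]; exact ⟨hc, h.const_inv_le⟩
    · rw [← neg_add, one_add_one_eq_two, ← sub_eq_add_neg]; exact ⟨hc_sub, h.const_sub_two_inv_le⟩
  rw [← hsum] at hgap
  rw [min_le_iff, min_le_iff]
  rcases h.inv_le_or hgap.1 with ⟨hne, hle⟩ | ⟨hne, hle⟩ <;>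
    rcases h.inv_le_or hne with ⟨-, hle'⟩ | ⟨-, hle'⟩
  · exact .inl (h.localHeight_le_of_inv_div_le hp (by linarith [hgap.2]))
  · rw [← localHeight_neg]
    refine .inl (h.symm.localHeight_le_of_inv_div_le hq ?_)
    rw [sub_neg_eq_add]
    linarith [hgap.2]
  · exact .inr (.inl (by linarith [hgap.2]))
  · exact .inr (.inr (by linarith [hgap.2]))

end IsErrorBound

end LocalHeight

section Charging

variable {N ℓ e : ℕ → ℝ}

lemma exists_charge (hN : ∀ n, 0 ≤ N n) (hℓ : ∀ n, 0 ≤ ℓ n) (he : ∀ n, 0 ≤ e n)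
    (hstep : ∀ n, N (n + 1) ≤ max (ℓ n) (ℓ (n + 2)) + e n)
    (hsep : ∀ n, min (ℓ (n + 1)) (min (N n) (N (n + 2))) ≤ e n) :
    ∃ R : ℕ → ℝ, ∀ n, 0 ≤ R n ∧ R n ≤ ℓ (n + 2) + e n ∧
      N (n + 3) - R (n + 2) + R n ≤ ℓ (n + 2) + e n + e (n + 1) + e (n + 2) := by
  set R : ℕ → ℝ := fun n ↦ if ℓ n ≤ ℓ (n + 2) then N (n + 1) else 0
  have hR_nonneg (n) : 0 ≤ R n := by dsimp only [R]; split_ifs <;> linarith [hN (n + 1)]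
  have hR_le_N (n) : R n ≤ N (n + 1) := by dsimp only [R]; split_ifs <;> linarith [hN (n + 1)]
  have hR_le_right (n) : R n ≤ ℓ (n + 2) + e n := by
    dsimp only [R]
    split_ifs with hle
    · simpa only [max_eq_right hle] using hstep n
    · exact add_nonneg (hℓ _) (he n)
  have hN_sub_R_le_left (n) : N (n + 1) - R n ≤ ℓ n + e n := by
    dsimp only [R]
    split_ifs with hle
    · simpa only [sub_self] using add_nonneg (hℓ n) (he n)
    · simpa only [sub_zero, max_eq_left (not_le.mp hle).le] using hstep n
  refine ⟨R, fun n ↦ ⟨hR_nonneg n, hR_le_right n, ?_⟩⟩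
  have hleft := hN_sub_R_le_left (n + 2)
  have hright := hR_le_right n
  rcases min_le_iff.mp (hsep (n + 1)) with hsmall | hfar
  · linarith
  · rcases min_le_iff.mp hfar with hfar | hfar
    · linarith [hR_le_N n, he n]
    · linarith [hR_nonneg (n + 2), he (n + 2)]

/-- Each `N (n + 1)` is charged to the larger of its two neighbours `ℓ n`, `ℓ (n + 2)`; up to the
error terms, no `ℓ n` is charged twice. -/
lemma sum_le_sum_of_charging (hN : ∀ n, 0 ≤ N n) (hℓ : ∀ n, 0 ≤ ℓ n) (he : ∀ n, 0 ≤ e n)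
    (hstep : ∀ n, N (n + 1) ≤ max (ℓ n) (ℓ (n + 2)) + e n)
    (hsep : ∀ n, min (ℓ (n + 1)) (min (N n) (N (n + 2))) ≤ e n) (k : ℕ) :
    ∑ i ∈ range k, N (i + 3) ≤
      ∑ i ∈ range (k + 2), ℓ (i + 2) + 3 * ∑ i ∈ range (k + 2), e i := by
  obtain ⟨R, hR⟩ := exists_charge hN hℓ he hstep hsep
  have hpartial : ∑ i ∈ range k, N (i + 3) + e k + 2 * e (k + 1) ≤
      ∑ i ∈ range k, ℓ (i + 2) + 3 * ∑ i ∈ range (k + 2), e i + R k + R (k + 1) := by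
    induction k with
    | zero =>
      simp only [sum_range_succ, range_zero, sum_empty]
      linarith [he 0, he 1, (hR 0).1, (hR 1).1]
    | succ k ih =>
      rw [sum_range_succ (fun i ↦ N (i + 3)), sum_range_succ (fun i ↦ ℓ (i + 2)),
        sum_range_succ e (k + 2)]
      linarith [(hR k).2.2]
  rw [sum_range_succ (fun i ↦ ℓ (i + 2)), sum_range_succ (fun i ↦ ℓ (i + 2))]
  linarith [he k, he (k + 1), (hR k).2.1, (hR (k + 1)).2.1]

end Charging

section Places

variable (K : Type*) [Field K] [AdmissibleAbsValues K]

open Classical in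
/-- The index type of the admissible absolute values of `K`; an archimedean one occurs as often as
its multiplicity. -/
abbrev AdmissiblePlace : Type _ :=
  (AdmissibleAbsValues.archAbsVal (K := K)).ToType ⊕ AdmissibleAbsValues.nonarchAbsVal (K := K)

namespace AdmissiblePlace

variable {K}

/-- The absolute value at a place. -/
def abv : AdmissiblePlace K → AbsoluteValue K ℝ := Sum.elim (fun v ↦ v.1) (fun v ↦ v.1)

/-- The Artin constant at a place: `2` if it is archimedean and `1` otherwise. -/
def artinConst : AdmissiblePlace K → ℝ := Sum.elim (fun _ ↦ 2) (fun _ ↦ 1)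

lemma isArtinConst (w : AdmissiblePlace K) : IsArtinConst w.abv w.artinConst := by
  rcases w with v | v
  · exact isArtinConst_two _
  · exact isArtinConst_one (AdmissibleAbsValues.isNonarchimedean _ v.2)

lemma hasFiniteSupport_localHeight (x : K) :
    (fun v : AdmissibleAbsValues.nonarchAbsVal (K := K) ↦ localHeight v.1 x).HasFiniteSupport := by
  rcases eq_or_ne x 0 with rfl | hx
  · simp [localHeight, Function.HasFiniteSupport]
  · refine (AdmissibleAbsValues.hasFiniteMulSupport hx).subset fun v hv ↦ ?_
    contrapose! hv
    rw [Function.notMem_mulSupport] at hv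
    rw [Function.notMem_support, localHeight, hv, posLog_one]

lemma hasSum_localHeight (x : K) :
    HasSum (fun w : AdmissiblePlace K ↦ localHeight w.abv x) (logHeight₁ x) := by
  classical
  rw [logHeight₁_eq]
  refine HasSum.sum ?_ ?_
  · have harch := hasSum_fintype
      fun v : (AdmissibleAbsValues.archAbsVal (K := K)).ToType ↦ log⁺ (v.1 x)
    rwa [Finset.sum, Multiset.map_univ _ fun v : AbsoluteValue K ℝ ↦ log⁺ (v x)] at harch
  · have hfin := hasFiniteSupport_localHeight x
    have hnonarch : HasSum _ _ := (summable_of_hasFiniteSupport hfin).hasSum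
    rwa [tsum_eq_finsum hfin] at hnonarch

lemma hasSum_log_artinConst :
    HasSum (fun w : AdmissiblePlace K ↦ log w.artinConst) (totalWeight K * log 2) := by
  classical
  rw [← add_zero (totalWeight K * log 2)]
  refine HasSum.sum ?_ ?_
  · have harch := hasSum_fintype
      fun _ : (AdmissibleAbsValues.archAbsVal (K := K)).ToType ↦ log 2
    rwa [sum_const, card_univ, Multiset.card_coe, nsmul_eq_mul] at harch
  · have hzero : (fun w : AdmissiblePlace K ↦ log w.artinConst) ∘ Sum.inr = fun _ ↦ 0 :=
      funext fun _ ↦ log_one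
    exact hzero ▸ hasSum_zero

lemma hasSum_poleProximity (y : K) :
    HasSum (fun w : AdmissiblePlace K ↦ poleProximity w.abv y)
      (logHeight₁ (1 - y)⁻¹ + logHeight₁ (1 + y)⁻¹) :=
  (hasSum_localHeight _).add (hasSum_localHeight _)

end AdmissiblePlace

end Places

section ErrorTerms

variable {K : Type*} [Field K]

/-- The quantities whose local heights enter the error term of `IsErrorBound`. -/
def errorTerms (p q c : K) : Fin 9 → K :=
  ![2⁻¹, p, p⁻¹, q, q⁻¹, c, c⁻¹, (c + 2)⁻¹, (c - 2)⁻¹]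

/-- The local error term of the recurrence `y' + y'' + c = p / (1 - y) + q / (1 + y)`. -/
noncomputable def localError (v : AbsoluteValue K ℝ) (κ : ℝ) (p q c : K) : ℝ :=
  log κ + ∑ j, localHeight v (errorTerms p q c j)

lemma IsArtinConst.isErrorBound {v : AbsoluteValue K ℝ} {κ : ℝ} (hκ : IsArtinConst v κ)
    (p q c : K) : IsErrorBound v κ (localError v κ p q c) p q c := by
  have hlog : 0 ≤ log κ := log_nonneg hκ.one_le
  have hheight (j) : 0 ≤ localHeight v (errorTerms p q c j) := localHeight_nonneg _ _
  have hterm (j) : localHeight v (errorTerms p q c j) ≤ localError v κ p q c :=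
    (single_le_sum (fun j _ ↦ hheight j) (mem_univ j)).trans (le_add_of_nonneg_left hlog)
  exact ⟨hκ, le_add_of_nonneg_right (sum_nonneg fun j _ ↦ hheight j), hterm 0, hterm 1, hterm 2,
    hterm 3, hterm 4, hterm 5, hterm 6, hterm 7, hterm 8⟩

variable [AdmissibleAbsValues K]

/-- The sum of the local error terms over all places. -/
noncomputable def globalError (p q c : K) : ℝ :=
  totalWeight K * log 2 + ∑ j, logHeight₁ (errorTerms p q c j)

lemma hasSum_localError (p q c : K) :
    HasSum (fun w : AdmissiblePlace K ↦ localError w.abv w.artinConst p q c)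
      (globalError p q c) :=
  AdmissiblePlace.hasSum_log_artinConst.add
    (hasSum_sum fun _ _ ↦ AdmissiblePlace.hasSum_localHeight _)

/-- The height of the coefficients of the recurrence, bounded below by `1`. -/
noncomputable def coeffHeight (a b c : K) : ℝ :=
  max 1 (max (logHeight₁ a) (max (logHeight₁ b) (logHeight₁ c)))

lemma one_le_coeffHeight (a b c : K) : 1 ≤ coeffHeight a b c := le_max_left _ _

lemma logHeight₁_div_two_le (x : K) :
    logHeight₁ (x / 2) ≤ logHeight₁ x + logHeight₁ (2 : K) := by
  simpa only [div_eq_mul_inv, logHeight₁_inv] using logHeight₁_mul_le x 2⁻¹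

variable (K) in
lemma exists_globalError_le : ∃ C, 0 ≤ C ∧ ∀ a b c : K,
    globalError ((a + b + c) / 2) ((a - b + c) / 2) c ≤ C * coeffHeight a b c := by
  set W := totalWeight K * log 2
  have hW : 0 ≤ W := mul_nonneg (Nat.cast_nonneg _) (log_nonneg one_le_two)
  have htwo : 0 ≤ logHeight₁ (2 : K) := zero_le_logHeight₁ 2
  refine ⟨11 * W + 7 * logHeight₁ (2 : K) + 16, by linarith, fun a b c ↦ ?_⟩
  set M := coeffHeight a b c
  have hM : 1 ≤ M := one_le_coeffHeight a b c
  have ha : logHeight₁ a ≤ M := le_max_of_le_right (le_max_left _ _)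
  have hb : logHeight₁ b ≤ M := le_max_of_le_right (le_max_of_le_right (le_max_left _ _))
  have hc : logHeight₁ c ≤ M := le_max_of_le_right (le_max_of_le_right (le_max_right _ _))
  have hp : logHeight₁ ((a + b + c) / 2) ≤ 3 * M + 2 * W + logHeight₁ (2 : K) := by
    linarith [logHeight₁_div_two_le (a + b + c), logHeight₁_add_le (a + b) c,
      logHeight₁_add_le a b]
  have hq : logHeight₁ ((a - b + c) / 2) ≤ 3 * M + 2 * W + logHeight₁ (2 : K) := by
    linarith [logHeight₁_div_two_le (a - b + c), logHeight₁_add_le (a - b) c,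
      logHeight₁_sub_le a b]
  have hsum : globalError ((a + b + c) / 2) ((a - b + c) / 2) c ≤
      11 * W + 7 * logHeight₁ (2 : K) + 16 * M := by
    simp only [globalError, errorTerms, Fin.sum_univ_succ, Fin.sum_univ_zero, Matrix.cons_val_zero,
      Matrix.cons_val_succ, logHeight₁_inv]
    linarith [logHeight₁_add_le c 2, logHeight₁_sub_le c 2]
  calc _ ≤ 11 * W + 7 * logHeight₁ (2 : K) + 16 * M := hsum
    _ ≤ (11 * W + 7 * logHeight₁ (2 : K)) * M + 16 * M := by
      gcongr
      exact le_mul_of_one_le_right (by linarith) hM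
    _ = _ := by ring

end ErrorTerms

section Recurrence

variable {K : Type*} [Field K]

/-- Nondegeneracy of `y' + y'' = (a + b y + c y²) / (1 - y²)`: the right-hand side has poles at
both `y = 1` and `y = -1`, and its value `-c` at `y = ∞` is not a sum of two of these poles. -/
structure IsNondegenerate (a b c : K) : Prop where
  const_ne_zero : c ≠ 0
  const_add_two_ne_zero : c + 2 ≠ 0
  const_sub_two_ne_zero : c - 2 ≠ 0
  numerator_one_ne_zero : a + b + c ≠ 0
  numerator_neg_one_ne_zero : a - b + c ≠ 0

lemma partial_fractions [NeZero (2 : K)] (a b c : K) {y : K} (hy : y ≠ 1 ∧ y ≠ -1) :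
    (a + b * y + c * y ^ 2) / (1 - y ^ 2) + c =
      (a + b + c) / 2 / (1 - y) + (a - b + c) / 2 / (1 + y) := by
  have hsub : 1 - y ≠ 0 := sub_ne_zero.mpr hy.1.symm
  have hadd : 1 + y ≠ 0 := fun h ↦ hy.2 (eq_neg_of_add_eq_zero_right h)
  have htwo : (2 : K) ≠ 0 := two_ne_zero
  have hfactor : 1 - y ^ 2 = (1 - y) * (1 + y) := by ring
  rw [hfactor]
  field_simp
  ring

variable {z a b c : ℕ → K}

lemma sum_poleProximity_le [NeZero (2 : K)] {v : AbsoluteValue K ℝ} {κ : ℝ}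
    (hκ : IsArtinConst v κ) (hnd : ∀ i, IsNondegenerate (a i) (b i) (c i))
    (hz : ∀ i, z i ≠ 1 ∧ z i ≠ -1)
    (hrec : ∀ i, z (i + 2) + z i =
      (a i + b i * z (i + 1) + c i * z (i + 1) ^ 2) / (1 - z (i + 1) ^ 2)) (k : ℕ) :
    ∑ i ∈ range k, poleProximity v (z (i + 3)) ≤ ∑ i ∈ range (k + 2), localHeight v (z (i + 2)) +
      3 * ∑ i ∈ range (k + 2),
        7 * localError v κ ((a i + b i + c i) / 2) ((a i - b i + c i) / 2) (c i) := by
  have herr (i) := hκ.isErrorBound ((a i + b i + c i) / 2) ((a i - b i + c i) / 2) (c i)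
  have hp (i) : (a i + b i + c i) / 2 ≠ 0 := div_ne_zero (hnd i).numerator_one_ne_zero two_ne_zero
  have hq (i) : (a i - b i + c i) / 2 ≠ 0 :=
    div_ne_zero (hnd i).numerator_neg_one_ne_zero two_ne_zero
  have hfrac (i) : z i + z (i + 2) + c i =
      (a i + b i + c i) / 2 / (1 - z (i + 1)) + (a i - b i + c i) / 2 / (1 + z (i + 1)) := by
    rw [add_comm (z i), hrec, partial_fractions _ _ _ (hz (i + 1))]
  refine sum_le_sum_of_charging (N := fun i ↦ poleProximity v (z i))
    (ℓ := fun i ↦ localHeight v (z i)) (fun _ ↦ poleProximity_nonneg _ _)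
    (fun _ ↦ localHeight_nonneg _ _) (fun i ↦ ?_) (fun i ↦ ?_) (fun i ↦ ?_) k
  · linarith [(herr i).nonneg]
  · exact (herr i).poleProximity_le (hp i) (hq i) (hfrac i)
  · refine ((herr i).min_localHeight_poleProximity_le (hp i) (hq i) (hnd i).const_ne_zero
      (hnd i).const_add_two_ne_zero (hnd i).const_sub_two_ne_zero (hfrac i)).trans ?_
    linarith [(herr i).nonneg]

variable [AdmissibleAbsValues K]

lemma two_mul_logHeight₁_le (y : K) :
    2 * logHeight₁ y ≤
      logHeight₁ (1 - y)⁻¹ + logHeight₁ (1 + y)⁻¹ + 2 * (totalWeight K * log 2) := by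
  have hsub := logHeight₁_sub_le 1 (1 - y)
  have hadd := logHeight₁_sub_le (1 + y) 1
  rw [sub_sub_cancel, logHeight₁_one] at hsub
  rw [add_sub_cancel_left, logHeight₁_one] at hadd
  rw [logHeight₁_inv, logHeight₁_inv]
  linarith

lemma exists_two_mul_sum_logHeight₁_le [NeZero (2 : K)]
    (hnd : ∀ i, IsNondegenerate (a i) (b i) (c i)) (hz : ∀ i, z i ≠ 1 ∧ z i ≠ -1)
    (hrec : ∀ i, z (i + 2) + z i =
      (a i + b i * z (i + 1) + c i * z (i + 1) ^ 2) / (1 - z (i + 1) ^ 2)) :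
    ∃ C, 0 ≤ C ∧ ∀ k, 2 * ∑ i ∈ range k, logHeight₁ (z (i + 3)) ≤
      ∑ i ∈ range (k + 2), logHeight₁ (z (i + 2)) +
        C * ∑ i ∈ range (k + 2), coeffHeight (a i) (b i) (c i) := by
  obtain ⟨C, hC, herror⟩ := exists_globalError_le K
  set W := totalWeight K * log 2
  have hW : 0 ≤ W := mul_nonneg (Nat.cast_nonneg _) (log_nonneg one_le_two)
  refine ⟨21 * C + 2 * W, by linarith, fun k ↦ ?_⟩
  set T := ∑ i ∈ range (k + 2), coeffHeight (a i) (b i) (c i)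
  have hpole : ∑ i ∈ range k, (logHeight₁ (1 - z (i + 3))⁻¹ + logHeight₁ (1 + z (i + 3))⁻¹) ≤
      ∑ i ∈ range (k + 2), logHeight₁ (z (i + 2)) + 3 * ∑ i ∈ range (k + 2),
        7 * globalError ((a i + b i + c i) / 2) ((a i - b i + c i) / 2) (c i) :=
    hasSum_le (fun w : AdmissiblePlace K ↦ sum_poleProximity_le w.isArtinConst hnd hz hrec k)
      (hasSum_sum fun _ _ ↦ AdmissiblePlace.hasSum_poleProximity _)
      ((hasSum_sum fun _ _ ↦ AdmissiblePlace.hasSum_localHeight _).add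
        ((hasSum_sum fun _ _ ↦ (hasSum_localError _ _ _).mul_left 7).mul_left 3))
  have herror_sum : ∑ i ∈ range (k + 2),
      7 * globalError ((a i + b i + c i) / 2) ((a i - b i + c i) / 2) (c i) ≤ 7 * (C * T) := by
    rw [← mul_sum, mul_sum (range (k + 2)) _ C]
    gcongr with i
    exact herror _ _ _
  have hheight : 2 * ∑ i ∈ range k, logHeight₁ (z (i + 3)) ≤
      ∑ i ∈ range k, (logHeight₁ (1 - z (i + 3))⁻¹ + logHeight₁ (1 + z (i + 3))⁻¹) +
        k * (2 * W) := by
    rw [mul_sum, ← nsmul_eq_mul, ← card_range k, ← sum_const, card_range, ← sum_add_distrib]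
    exact sum_le_sum fun i _ ↦ two_mul_logHeight₁_le _
  have hk : (k : ℝ) ≤ T := by
    have hcard := card_nsmul_le_sum (range (k + 2)) _ 1
      fun i _ ↦ one_le_coeffHeight (a i) (b i) (c i)
    rw [card_range, nsmul_eq_mul, mul_one, Nat.cast_add] at hcard
    exact (le_add_of_nonneg_right (Nat.cast_nonneg 2)).trans hcard
  have hkW : k * (2 * W) ≤ T * (2 * W) := by gcongr
  linarith

end Recurrence

section Growth

lemma sum_Icc_add {α : Type*} [AddCommMonoid α] (f : ℕ → α) {m n : ℕ} (hmn : m ≤ n) (k : ℕ) :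
    ∑ i ∈ Icc m (n + k), f i = ∑ i ∈ Icc m n, f i + ∑ i ∈ range k, f (n + 1 + i) := by
  induction k with
  | zero => simp
  | succ k ih =>
    rw [← add_assoc, sum_Icc_succ_top (by omega), ih, sum_range_succ, add_assoc, add_right_comm n]

lemma tendsto_sum_Icc_atTop {M : ℕ → ℝ} (hM : ∀ n, 1 ≤ M n) (m : ℕ) :
    Tendsto (fun r ↦ ∑ n ∈ Icc m r, M n) atTop atTop := by
  refine tendsto_atTop_mono (fun r ↦ ?_)
    (tendsto_atTop_add_const_right _ (-(m : ℝ)) tendsto_natCast_atTop_atTop)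
  calc (r : ℝ) + -(m : ℝ) ≤ ((r + 1 - m : ℕ) : ℝ) := by
        rw [← sub_eq_add_neg, sub_le_iff_le_add]
        exact_mod_cast (by omega : r ≤ r + 1 - m + m)
    _ ≤ ∑ n ∈ Icc m r, M n := by
      simpa using card_nsmul_le_sum (Icc m r) M 1 fun n _ ↦ hM n

variable {h T H : ℕ → ℝ}

lemma exists_two_mul_sum_Icc_le {M : ℕ → ℝ} {m n : ℕ} (hmn : m ≤ n)
    (hh : ∀ i, 0 ≤ h i) (hM : ∀ i, 0 ≤ M i) {C : ℝ} (hC : 0 ≤ C)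
    (hsum : ∀ k, 2 * ∑ i ∈ range k, h (n + (i + 3)) ≤
      ∑ i ∈ range (k + 2), h (n + (i + 2)) + C * ∑ i ∈ range (k + 2), M (n + 1 + i)) :
    ∃ B, ∀ᶠ r in atTop, 2 * ∑ i ∈ Icc m r, h i ≤
      ∑ i ∈ Icc m (r + 1), h i + C * ∑ i ∈ Icc m r, M i + B := by
  refine ⟨2 * ∑ i ∈ Icc m (n + 2), h i, eventually_atTop.mpr ⟨n + 2, fun r hr ↦ ?_⟩⟩
  obtain ⟨k, rfl⟩ := Nat.exists_eq_add_of_le hr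
  have hleft : ∑ i ∈ Icc m (n + 2 + k), h i =
      ∑ i ∈ Icc m (n + 2), h i + ∑ i ∈ range k, h (n + (i + 3)) := by
    rw [sum_Icc_add h (by omega)]
    exact congrArg _ (sum_congr rfl fun i _ ↦ congrArg h (by omega))
  have hright : ∑ i ∈ range (k + 2), h (n + (i + 2)) ≤ ∑ i ∈ Icc m (n + 2 + k + 1), h i := by
    rw [(by omega : n + 2 + k + 1 = n + 1 + (k + 2)), sum_Icc_add h (by omega : m ≤ n + 1)]
    exact (sum_congr rfl fun i _ ↦ congrArg h (by omega)).trans_le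
      (le_add_of_nonneg_left (sum_nonneg fun i _ ↦ hh i))
  have herror : ∑ i ∈ range (k + 2), M (n + 1 + i) ≤ ∑ i ∈ Icc m (n + 2 + k), M i := by
    rw [(by omega : n + 2 + k = n + (k + 2)), sum_Icc_add M hmn]
    exact le_add_of_nonneg_left (sum_nonneg fun i _ ↦ hM i)
  linarith [hsum k, mul_le_mul_of_nonneg_left herror hC]

lemma eventually_mul_le_succ (hH : Tendsto H atTop atTop) (hTH : T =o[atTop] H) {B C : ℝ}
    (hstep : ∀ᶠ r in atTop, 2 * H r ≤ H (r + 1) + C * T r + B) {F : ℝ} (hF : F < 2) :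
    ∀ᶠ r in atTop, F * H r ≤ H (r + 1) := by
  have hB : (fun _ : ℕ ↦ B) =o[atTop] H :=
    isLittleO_const_left.mpr (.inr (tendsto_norm_atTop_atTop.comp hH))
  filter_upwards [hstep, ((hTH.const_mul_left C).add hB).bound (sub_pos.mpr hF),
    hH.eventually_ge_atTop 0] with r hr herr hpos
  rw [norm_of_nonneg hpos] at herr
  linarith [le_norm_self (C * T r + B)]

lemma pow_isBigO_of_eventually_mul_le_succ (hH : Tendsto H atTop atTop) {F : ℝ} (hF : 0 ≤ F)
    (hstep : ∀ᶠ r in atTop, F * H r ≤ H (r + 1)) : (fun r ↦ F ^ r) =O[atTop] H := by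
  obtain ⟨R, hR⟩ := eventually_atTop.mp (hstep.and (hH.eventually_gt_atTop 0))
  have hHR : 0 < H R := (hR R le_rfl).2
  refine .of_bound (F ^ R / H R) (eventually_atTop.mpr ⟨R, fun r hr ↦ ?_⟩)
  obtain ⟨k, rfl⟩ := Nat.exists_eq_add_of_le hr
  have hgeom : F ^ k * H R ≤ H (R + k) :=
    geom_le (u := fun k ↦ H (R + k)) hF k fun j _ ↦ (hR (R + j) (Nat.le_add_right _ _)).1
  rw [norm_of_nonneg (pow_nonneg hF _), norm_of_nonneg (hR _ hr).2.le]
  calc F ^ (R + k) = F ^ R / H R * (F ^ k * H R) := by field_simp; ring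
    _ ≤ F ^ R / H R * H (R + k) := by gcongr

lemma sum_Icc_isBigO_sum_Icc {m n : ℕ} (hmn : m ≤ n)
    (hH : Tendsto (fun r ↦ ∑ i ∈ Icc m r, h i) atTop atTop) :
    (fun r ↦ ∑ i ∈ Icc m r, h i) =O[atTop] (fun r ↦ ∑ i ∈ Icc n r, h i) := by
  refine .of_bound 2 ?_
  filter_upwards [hH.eventually_ge_atTop (2 * (∑ i ∈ Icc m n, h i - h n)),
    hH.eventually_ge_atTop 0, eventually_ge_atTop n] with r hlarge hpos hr
  obtain ⟨k, rfl⟩ := Nat.exists_eq_add_of_le hr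
  have htail := sum_Icc_add h le_rfl (n := n) k
  rw [Icc_self, sum_singleton] at htail
  rw [norm_of_nonneg hpos]
  linarith [sum_Icc_add h hmn k, le_norm_self (∑ i ∈ Icc n (n + k), h i)]

/-- Starting the sum at an index `r₀` with `h r₀ > 0` makes every partial sum positive, so that the
asymptotic bound `F ^ r = O(∑ h)` holds for all `r ≥ r₀` with a uniform constant. -/
lemma exists_mul_pow_le_sum_Icc (hh : ∀ n, 0 ≤ h n) {m : ℕ}
    (hH : Tendsto (fun r ↦ ∑ n ∈ Icc m r, h n) atTop atTop)
    (hstep : ∀ F : ℝ, 1 < F → F < 2 → ∀ᶠ r in atTop,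
      F * ∑ n ∈ Icc m r, h n ≤ ∑ n ∈ Icc m (r + 1), h n) :
    ∃ r₀ : ℕ, m ≤ r₀ ∧ ∀ F : ℝ, 1 < F → F < 2 →
      ∃ D : ℝ, 0 < D ∧ ∀ r : ℕ, r₀ ≤ r → D * F ^ r ≤ ∑ n ∈ Icc r₀ r, h n := by
  obtain ⟨r, hr⟩ := (hH.eventually_gt_atTop 0).exists
  obtain ⟨r₀, hr₀, hpos⟩ := (sum_pos_iff_of_nonneg fun n _ ↦ hh n).mp hr
  have hm : m ≤ r₀ := (mem_Icc.mp hr₀).1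
  refine ⟨r₀, hm, fun F hF₁ hF₂ ↦ ?_⟩
  have hF₀ : 0 ≤ F := by linarith
  obtain ⟨C, hC, hbound⟩ := bound_of_isBigO_nat_atTop
    ((pow_isBigO_of_eventually_mul_le_succ hH hF₀ (hstep F hF₁ hF₂)).trans
      (sum_Icc_isBigO_sum_Icc hm hH))
  refine ⟨C⁻¹, inv_pos.mpr hC, fun r hr ↦ ?_⟩
  have hsum_pos : 0 < ∑ n ∈ Icc r₀ r, h n :=
    hpos.trans_le (single_le_sum (fun n _ ↦ hh n) (left_mem_Icc.mpr hr))
  have hle := hbound hsum_pos.ne'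
  rwa [norm_of_nonneg (pow_nonneg hF₀ r), norm_of_nonneg hsum_pos.le,
    ← inv_mul_le_iff₀ hC] at hle

end Growth

theorem exponential_height_growth_general {K : Type*} [Field K] [AdmissibleAbsValues K]
    [NeZero (2 : K)] {a b c y : ℕ → K} {n₀ : ℕ}
    (hnd : ∀ᶠ n in atTop, IsNondegenerate (a n) (b n) (c n))
    (hy : ∀ n, n₀ ≤ n → y n ≠ 1 ∧ y n ≠ -1)
    (hrec : ∀ n, n₀ < n →
      y (n + 1) + y (n - 1) = (a n + b n * y n + c n * y n ^ 2) / (1 - y n ^ 2))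
    (hadm : (fun r ↦ ∑ n ∈ Icc n₀ r, coeffHeight (a n) (b n) (c n)) =o[atTop]
      (fun r ↦ ∑ n ∈ Icc n₀ r, logHeight₁ (y n))) :
    ∃ r₀ : ℕ, n₀ ≤ r₀ ∧ ∀ F : ℝ, 1 < F → F < 2 →
      ∃ D : ℝ, 0 < D ∧ ∀ r : ℕ, r₀ ≤ r → D * F ^ r ≤ ∑ n ∈ Icc r₀ r, logHeight₁ (y n) := by
  obtain ⟨n₁, hn₁⟩ := eventually_atTop.mp hnd
  set n := max n₀ n₁
  have hn₀ : n₀ ≤ n := le_max_left _ _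
  have hM (i) : 1 ≤ coeffHeight (a i) (b i) (c i) := one_le_coeffHeight _ _ _
  have hh (i) : 0 ≤ logHeight₁ (y i) := zero_le_logHeight₁ _
  obtain ⟨C, hC, hshift⟩ := exists_two_mul_sum_logHeight₁_le (z := fun i ↦ y (n + i))
    (a := fun i ↦ a (n + 1 + i)) (b := fun i ↦ b (n + 1 + i)) (c := fun i ↦ c (n + 1 + i))
    (fun i ↦ hn₁ _ (by omega)) (fun i ↦ hy _ (by omega))
    (fun i ↦ by simpa [add_comm, add_left_comm, add_assoc] using hrec (n + 1 + i) (by omega))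
  obtain ⟨B, hstep⟩ := exists_two_mul_sum_Icc_le (h := fun i ↦ logHeight₁ (y i)) hn₀ hh
    (fun i ↦ zero_le_one.trans (hM i)) hC hshift
  have hH : Tendsto (fun r ↦ ∑ i ∈ Icc n₀ r, logHeight₁ (y i)) atTop atTop := by
    refine tendsto_atTop_mono' _ ?_ (tendsto_sum_Icc_atTop hM n₀)
    filter_upwards [hadm.bound one_pos] with r hr
    rw [one_mul, norm_of_nonneg (sum_nonneg fun i _ ↦ hh i)] at hr
    exact (le_norm_self _).trans hr
  exact exists_mul_pow_le_sum_Icc hh hH fun F _ hF₂ ↦ eventually_mul_le_succ hH hadm hstep hF₂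

section RationalFunctions

lemma ratHeight_eq_logHeight₁ (x : ℚ) : ratHeight x = logHeight₁ x := by
  rw [ratHeight, Rat.logHeight₁_eq_log_max, Nat.cast_max, Nat.cast_natAbs]
  push_cast
  rfl

lemma eventually_eval_natCast_ne_zero {p : Polynomial ℚ} (hp : p ≠ 0) :
    ∀ᶠ n : ℕ in atTop, p.eval (n : ℚ) ≠ 0 :=
  tendsto_natCast_atTop_atTop.eventually (p.eventually_atTop_not_isRoot hp)

lemma eventually_evalRF_ne_zero {f : RatFunc ℚ} (hf : f ≠ 0) :
    ∀ᶠ n in atTop, evalRF f n ≠ 0 := by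
  filter_upwards [eventually_eval_natCast_ne_zero (RatFunc.num_ne_zero hf),
    eventually_eval_natCast_ne_zero f.denom_ne_zero] with n hnum hdenom
  exact div_ne_zero hnum hdenom

lemma eventually_evalRF_add (f g : RatFunc ℚ) :
    ∀ᶠ n in atTop, evalRF (f + g) n = evalRF f n + evalRF g n := by
  filter_upwards [eventually_eval_natCast_ne_zero f.denom_ne_zero,
    eventually_eval_natCast_ne_zero g.denom_ne_zero] with n hf hg
  exact RatFunc.eval_add _ _ hf hg

lemma eventually_evalRF_sub (f g : RatFunc ℚ) :
    ∀ᶠ n in atTop, evalRF (f - g) n = evalRF f n - evalRF g n := by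
  filter_upwards [eventually_evalRF_add (f - g) g] with n hn
  rw [sub_add_cancel] at hn
  exact eq_sub_of_add_eq hn.symm

lemma evalRF_C (q : ℚ) (n : ℕ) : evalRF (RatFunc.C q) n = q := by
  rw [evalRF, RatFunc.eval_C, RingHom.id_apply]

lemma eval_ne_zero_of_isCoprime {R : Type*} [CommRing R] [Nontrivial R] {p q : Polynomial R}
    (hpq : IsCoprime p q) {x : R} (hq : q.eval x = 0) : p.eval x ≠ 0 := by
  have hx := hpq.map (Polynomial.evalRingHom x)
  rw [Polynomial.coe_evalRingHom, hq, isCoprime_zero_right] at hx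
  exact hx.ne_zero

lemma eventually_isNondegenerate_evalRF {a b c : RatFunc ℚ}
    (hc0 : c ≠ 0) (hc2 : c ≠ RatFunc.C 2) (hc2' : c ≠ RatFunc.C (-2))
    (hcop : IsCoprime
      (Polynomial.C a + Polynomial.C b * Polynomial.X + Polynomial.C c * Polynomial.X ^ 2)
      (1 - Polynomial.X ^ 2 : Polynomial (RatFunc ℚ))) :
    ∀ᶠ n in atTop, IsNondegenerate (evalRF a n) (evalRF b n) (evalRF c n) := by
  have hone : a + b + c ≠ 0 := by
    simpa using eval_ne_zero_of_isCoprime hcop (x := 1) (by simp)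
  have hneg_one : a - b + c ≠ 0 := by
    simpa [← sub_eq_add_neg] using eval_ne_zero_of_isCoprime hcop (x := -1) (by simp)
  have hadd : c + RatFunc.C 2 ≠ 0 := by
    rwa [Ne, add_eq_zero_iff_eq_neg, ← map_neg]
  filter_upwards [eventually_evalRF_ne_zero hc0, eventually_evalRF_ne_zero hadd,
    eventually_evalRF_ne_zero (sub_ne_zero.mpr hc2), eventually_evalRF_ne_zero hone,
    eventually_evalRF_ne_zero hneg_one, eventually_evalRF_add c (RatFunc.C 2),
    eventually_evalRF_sub c (RatFunc.C 2), eventually_evalRF_add (a + b) c,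
    eventually_evalRF_add a b, eventually_evalRF_add (a - b) c, eventually_evalRF_sub a b]
    with n hn0 hn_add hn_sub hn_one hn_neg_one eq_add eq_sub eq_one eq_one' eq_neg_one eq_neg_one'
  rw [eq_add, evalRF_C] at hn_add
  rw [eq_sub, evalRF_C] at hn_sub
  rw [eq_one, eq_one'] at hn_one
  rw [eq_neg_one, eq_neg_one'] at hn_neg_one
  exact ⟨hn0, hn_add, hn_sub, hn_one, hn_neg_one⟩

end RationalFunctions

/-- Theorem 3: if `c_n` is not identically `0`, `2` or `-2` and the right
side has degree two, then the summed logarithmic height of an admissible solution grows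
at least like `F^r` for every `1 < F < 2`. -/
theorem exponential_height_growth (a b c : RatFunc ℚ)
    (hc0 : c ≠ 0) (hc2 : c ≠ RatFunc.C 2) (hc2' : c ≠ RatFunc.C (-2))
    (hcop : IsCoprime
      (Polynomial.C a + Polynomial.C b * Polynomial.X + Polynomial.C c * Polynomial.X ^ 2)
      (1 - Polynomial.X ^ 2 : Polynomial (RatFunc ℚ)))
    (hdeg : max
      (Polynomial.C a + Polynomial.C b * Polynomial.X +
        Polynomial.C c * Polynomial.X ^ 2 : Polynomial (RatFunc ℚ)).natDegree
      (1 - Polynomial.X ^ 2 : Polynomial (RatFunc ℚ)).natDegree = 2)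
    (n0 : ℕ) (y : ℕ → ℚ)
    (hy : ∀ n : ℕ, n0 ≤ n → y n ≠ 1 ∧ y n ≠ -1)
    (heq : ∀ n : ℕ, n0 < n →
      y (n + 1) + y (n - 1) =
        (evalRF a n + evalRF b n * y n + evalRF c n * y n ^ 2) / (1 - y n ^ 2))
    (hadm : (fun r : ℕ => ∑ n ∈ Finset.Icc n0 r,
        max 1 (max (ratHeight (evalRF a n))
          (max (ratHeight (evalRF b n)) (ratHeight (evalRF c n)))))
      =o[Filter.atTop]
      (fun r : ℕ => ∑ n ∈ Finset.Icc n0 r, ratHeight (y n))) :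
    ∃ r0 : ℕ, n0 ≤ r0 ∧ ∀ F : ℝ, 1 < F → F < 2 →
      ∃ D : ℝ, 0 < D ∧ ∀ r : ℕ, r0 ≤ r →
        D * F ^ r ≤ ∑ n ∈ Finset.Icc r0 r, ratHeight (y n) := by
  simp only [ratHeight_eq_logHeight₁] at hadm ⊢
  exact exponential_height_growth_general
    (eventually_isNondegenerate_evalRF hc0 hc2 hc2' hcop) hy heq hadm
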